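/- There exists a positive definite even unimodular lattice of rank 24 whose minimum norm is 4 (a Leech lattice exists). That is, there is a lattice L in a 24-dimensional real inner product space with ⟪x,y⟫ ∈ ℤ and ⟪x,x⟫ ∈ 2ℤ for all x,y ∈ L, Gram determinant 1, and ⟪x,x⟫ ≥ 4 for all nonzero x ∈ L. -/

import Mathlib

noncomputable section

open scoped RealInnerProductSpace Pointwise
open Module

variable {V : Type*} [NormedAddCommGroup V] [InnerProductSpace ℝ V]

/-- `L` is a (full) lattice in `V`: a finitely generated `ℤ`-submodule spanning `V` over `ℝ`. -/
def IsLat (L : Submodule ℤ V) : Prop :=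
  L.FG ∧ Submodule.span ℝ (L : Set V) = ⊤

/-- The lattice `L` is integral: all inner products of lattice vectors are integers. -/
def IsIntegralLat (L : Submodule ℤ V) : Prop :=
  ∀ x ∈ L, ∀ y ∈ L, ∃ n : ℤ, ⟪x, y⟫ = (n : ℝ)

/-- The lattice `L` is even: it is integral and all norms are even integers. -/
def IsEvenLat (L : Submodule ℤ V) : Prop :=
  IsIntegralLat L ∧ ∀ x ∈ L, ∃ n : ℤ, ⟪x, x⟫ = 2 * (n : ℝ)

/-- The lattice `L` is unimodular: the Gram matrix of some `ℤ`-basis has determinant 1. -/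
def IsUnimodularLat (L : Submodule ℤ V) : Prop :=
  ∃ (n : ℕ) (b : Basis (Fin n) ℤ L),
    (Matrix.of fun i j : Fin n => ⟪(b i : V), (b j : V)⟫).det = 1

/-- The minimum norm `μ(L)` of a lattice. -/
def minNorm (L : Submodule ℤ V) : ℝ :=
  sInf {r : ℝ | ∃ x ∈ L, x ≠ 0 ∧ ⟪x, x⟫ = r}

/-- `√2·Υ` is an even unimodular lattice: all norms of `Υ` are integers, all doubled inner
products are integers, and the Gram matrix of the form `2⟪·,·⟫` on a `ℤ`-basis of `Υ` has
determinant 1. -/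
def SqrtTwoEvenUnimod (Υ : Submodule ℤ V) : Prop :=
  (∀ x ∈ Υ, ∃ n : ℤ, ⟪x, x⟫ = (n : ℝ)) ∧
  (∀ x ∈ Υ, ∀ y ∈ Υ, ∃ n : ℤ, 2 * ⟪x, y⟫ = (n : ℝ)) ∧
  ∃ (n : ℕ) (b : Basis (Fin n) ℤ Υ),
    (Matrix.of fun i j : Fin n => 2 * ⟪(b i : V), (b j : V)⟫).det = 1

/-- `M, N` is a polarization of `Υ`: a pair of integral sublattices with
`M + N = Υ` and `M ∩ N = 2Υ`. -/
def IsPolarization (Υ M N : Submodule ℤ V) : Prop :=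
  M ≤ Υ ∧ N ≤ Υ ∧ IsIntegralLat M ∧ IsIntegralLat N ∧ M ⊔ N = Υ ∧ M ⊓ N = (2 : ℤ) • Υ

/-- The sublattice `L_M = {(x_1,…,x_k) ∈ M^k : x_1+⋯+x_k ∈ M ∩ N}` of `V^k`. -/
def LsubM (M N : Submodule ℤ V) (k : ℕ) : Submodule ℤ (PiLp 2 fun _ : Fin k => V) where
  carrier := {v | (∀ i, v i ∈ M) ∧ (∑ i, v i) ∈ M ⊓ N}
  add_mem' := fun {a b} ha hb =>
    ⟨fun i => M.add_mem (ha.1 i) (hb.1 i), by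
      have h : (∑ i, (a + b) i) = (∑ i, a i) + ∑ i, b i :=
        (Finset.sum_congr rfl fun i _ => rfl).trans Finset.sum_add_distrib
      rw [h]; exact (M ⊓ N).add_mem ha.2 hb.2⟩
  zero_mem' := ⟨fun _ => M.zero_mem, by
      have h : (∑ i : Fin k, (0 : PiLp 2 fun _ : Fin k => V) i) = 0 :=
        Finset.sum_eq_zero fun _ _ => rfl
      rw [h]; exact (M ⊓ N).zero_mem⟩
  smul_mem' := fun c a ha =>
    ⟨fun i => M.smul_mem c (ha.1 i), by
      have h : (∑ i, (c • a) i) = c • ∑ i, a i := by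
        show (∑ i, c • a i) = c • ∑ i, a i
        exact Finset.smul_sum.symm
      rw [h]; exact (M ⊓ N).smul_mem c ha.2⟩

/-- The diagonal sublattice `L^N = {(y,…,y) : y ∈ N}` of `V^k`. -/
def LsupN (N : Submodule ℤ V) (k : ℕ) : Submodule ℤ (PiLp 2 fun _ : Fin k => V) where
  carrier := {v | ∃ y ∈ N, ∀ i, v i = y}
  add_mem' := fun {a b} ha hb => by
    obtain ⟨ya, hya, ha⟩ := ha
    obtain ⟨yb, hyb, hb⟩ := hb
    exact ⟨ya + yb, N.add_mem hya hyb, fun i => by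
      show a i + b i = ya + yb
      rw [ha i, hb i]⟩
  zero_mem' := ⟨0, N.zero_mem, fun _ => rfl⟩
  smul_mem' := fun c a ha => by
    obtain ⟨y, hy, h⟩ := ha
    exact ⟨c • y, N.smul_mem c hy, fun i => by
      show c • a i = c • y
      rw [h i]⟩

/-- The lattice `L(M,N,k) = L_M + L^N ⊆ V^k`. -/
def LMN (M N : Submodule ℤ V) (k : ℕ) : Submodule ℤ (PiLp 2 fun _ : Fin k => V) :=
  LsubM M N k ⊔ LsupN N k

/-- The Leech polarization setup: `V` is 24-dimensional, `√2·Υ` is even unimodular with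
minimum norm 4, and `M, N` is a polarization of `Υ` by two copies of the Leech lattice. -/
def LeechSetup (Υ M N : Submodule ℤ V) : Prop :=
  Module.finrank ℝ V = 24 ∧ IsLat Υ ∧ SqrtTwoEvenUnimod Υ ∧
  (∀ v ∈ Υ, v ≠ 0 → 4 ≤ 2 * ⟪v, v⟫) ∧
  IsPolarization Υ M N ∧
  IsLat M ∧ IsEvenLat M ∧ IsUnimodularLat M ∧ minNorm M = 4 ∧
  IsLat N ∧ IsEvenLat N ∧ IsUnimodularLat N ∧ minNorm N = 4

/-- `(w,x,y,z) ∈ N × M × M × M` is admissible if `x + y + z ∈ M ∩ N`. -/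
def Admissible (M N : Submodule ℤ V) (w x y z : V) : Prop :=
  w ∈ N ∧ x ∈ M ∧ y ∈ M ∧ z ∈ M ∧ x + y + z ∈ M ⊓ N

/-- An offender is an admissible quadruple all three of whose associated vectors
`w+x, w+y, w+z` have norm 2. -/
def Offender (M N : Submodule ℤ V) (w x y z : V) : Prop :=
  Admissible M N w x y z ∧
  ⟪w + x, w + x⟫ = 2 ∧ ⟪w + y, w + y⟫ = 2 ∧ ⟪w + z, w + z⟫ = 2

/-- A super offender is an offender with `⟪w,w⟫ = 4` whose multiset of norms
`{⟪x,x⟫, ⟪y,y⟫, ⟪z,z⟫}` equals `{6,6,4}`. -/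
def SuperOffender (M N : Submodule ℤ V) (w x y z : V) : Prop :=
  Offender M N w x y z ∧ ⟪w, w⟫ = 4 ∧
  ({⟪x, x⟫, ⟪y, y⟫, ⟪z, z⟫} : Multiset ℝ) = ({6, 6, 4} : Multiset ℝ)

/-!
If `Υ* = 2Υ` and `Υ` has integral norms (`Υ` is `E₈` scaled by `1 / √2`), and `α` acts on `Υ` as the
Kleinian integer `(1 + √-7) / 2`, whose norm is `2`, then `M = αΥ` and `N = (1 - α)Υ` are copies of
`E₈` with `M + N = Υ` and `M ∩ N = 2Υ`. The lattice `L(M,N,3)` of all `(n + x₁, n + x₂, n + x₃)`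
with `n ∈ N`, `xᵢ ∈ M` and `x₁ + x₂ + x₃ ∈ M ∩ N` is then even and self-dual.

It has no vector of norm `2`. All coordinates lie in `Υ`, so a vector without zero coordinates has
norm at least `3`, hence at least `4` by evenness. If a coordinate vanishes, all coordinates lie in
`M`: two nonzero ones contribute at least `2` each, while a single one lies in `M ∩ N = 2Υ` and has
norm at least `4`.
-/

/-! ### Self-dual lattices -/

theorem innerₗ_nondegenerate : LinearMap.BilinForm.Nondegenerate (innerₗ V) := by
  refine (LinearMap.IsSymm.isRefl isSymm_inner).nondegenerate_iff_separatingLeft.2 fun v hv => ?_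
  exact inner_self_eq_zero.1 (hv v)

/-- The dual lattice `L* = {x : ⟪x, y⟫ ∈ ℤ for all y ∈ L}` with respect to the inner product. -/
abbrev dualLat (L : Submodule ℤ V) : Submodule ℤ V :=
  LinearMap.BilinForm.dualSubmodule (innerₗ V) L

/-- `L` is self-dual: `L* = L`. In finite dimension this entails that `L` is a unimodular lattice,
see `IsSelfDualLat.isLat` and `IsSelfDualLat.isUnimodularLat`. -/
def IsSelfDualLat (L : Submodule ℤ V) : Prop :=
  dualLat L = L

theorem mem_dualLat {L : Submodule ℤ V} {x : V} :
    x ∈ dualLat L ↔ ∀ y ∈ L, ∃ n : ℤ, ⟪x, y⟫ = (n : ℝ) := by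
  simp only [LinearMap.BilinForm.mem_dualSubmodule, Submodule.mem_one, innerₗ_apply_apply,
    algebraMap_int_eq, eq_intCast, eq_comm]

theorem isIntegralLat_iff_le_dualLat {L : Submodule ℤ V} : IsIntegralLat L ↔ L ≤ dualLat L :=
  forall₂_congr fun _ _ => mem_dualLat.symm

theorem one_le_inner_self {x : V} (hx : x ≠ 0) (hn : ∃ n : ℤ, ⟪x, x⟫ = (n : ℝ)) :
    1 ≤ ⟪x, x⟫ := by
  obtain ⟨n, hn⟩ := hn
  have hpos := real_inner_self_pos.2 hx
  rw [hn] at hpos ⊢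
  exact_mod_cast hpos

theorem IsEvenLat.two_le_inner_self {L : Submodule ℤ V} (hL : IsEvenLat L) {x : V} (hx : x ∈ L)
    (hx0 : x ≠ 0) : 2 ≤ ⟪x, x⟫ := by
  obtain ⟨n, hn⟩ := hL.2 x hx
  have hpos := real_inner_self_pos.2 hx0
  rw [hn] at hpos ⊢
  have one_le : 0 < n := by
    have : 0 < 2 * n := by exact_mod_cast hpos
    lia
  exact_mod_cast (by lia : 2 ≤ 2 * n)

theorem IsIntegralLat.discreteTopology {L : Submodule ℤ V} (hL : IsIntegralLat L) :
    DiscreteTopology L := by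
  refine DiscreteTopology.of_forall_le_norm one_pos fun x hx => ?_
  have hsq := one_le_inner_self (Subtype.coe_ne_coe.2 hx) (hL x x.2 x x.2)
  rw [real_inner_self_eq_norm_sq] at hsq
  exact (one_le_sq_iff₀ (norm_nonneg _)).1 hsq

namespace IsSelfDualLat

variable {L : Submodule ℤ V}

theorem isIntegralLat (hL : IsSelfDualLat L) : IsIntegralLat L :=
  isIntegralLat_iff_le_dualLat.2 hL.ge

theorem span_eq_top [FiniteDimensional ℝ V] (hL : IsSelfDualLat L) :
    Submodule.span ℝ (L : Set V) = ⊤ := by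
  rw [← Submodule.orthogonal_eq_bot_iff, Submodule.eq_bot_iff]
  intro v hv
  have orthogonal (x : V) (hx : x ∈ L) : ⟪v, x⟫ = 0 :=
    Submodule.inner_left_of_mem_orthogonal (Submodule.subset_span hx) hv
  have mem : v ∈ L := hL ▸ mem_dualLat.2 fun x hx => ⟨0, by rw [orthogonal x hx, Int.cast_zero]⟩
  exact inner_self_eq_zero.1 (orthogonal v mem)

theorem isLat [FiniteDimensional ℝ V] (hL : IsSelfDualLat L) : IsLat L := by
  have := hL.isIntegralLat.discreteTopology
  have : IsZLattice ℝ L := ⟨hL.span_eq_top⟩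
  exact ⟨ZLattice.FG ℝ L, hL.span_eq_top⟩

theorem exists_dual_family {n : Type*} [Finite n] [DecidableEq n] [FiniteDimensional ℝ V]
    (hL : IsSelfDualLat L) (b : Basis n ℤ L) :
    ∃ d : n → L, ∀ i k, ⟪(d i : V), (b k : V)⟫ = if k = i then 1 else 0 := by
  have := hL.isIntegralLat.discreteTopology
  have : IsZLattice ℝ L := ⟨hL.span_eq_top⟩
  let d := LinearMap.BilinForm.dualBasis (innerₗ V) innerₗ_nondegenerate (b.ofZLatticeBasis ℝ)
  have span_d : Submodule.span ℤ (Set.range d) = L := by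
    rw [← LinearMap.BilinForm.dualSubmodule_span_of_basis, b.ofZLatticeBasis_span ℝ]
    exact hL
  refine ⟨fun i => ⟨d i, span_d.le (Submodule.subset_span ⟨i, rfl⟩)⟩, fun i k => ?_⟩
  simpa using LinearMap.BilinForm.apply_dualBasis_left innerₗ_nondegenerate
    (b.ofZLatticeBasis ℝ) i k

theorem exists_isUnit_det_gram {n : Type*} [Fintype n] [DecidableEq n] [FiniteDimensional ℝ V]
    (hL : IsSelfDualLat L) (b : Basis n ℤ L) :
    ∃ G : Matrix n n ℤ, IsUnit G.det ∧
      G.map (Int.cast : ℤ → ℝ) = Matrix.gram ℝ fun i => (b i : V) := by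
  obtain ⟨d, inner_d⟩ := hL.exists_dual_family b
  choose G hG using fun i j => hL.isIntegralLat _ (b i).2 _ (b j).2
  let A : Matrix n n ℤ := .of fun i j => b.repr (d i) j
  have d_eq (i : n) : (d i : V) = ∑ j, A i j • (b j : V) := by
    simpa only [A, Matrix.of_apply, map_sum, map_smul, Submodule.subtype_apply] using
      congrArg L.subtype (b.sum_repr (d i)).symm
  refine ⟨.of G, Matrix.isUnit_det_of_left_inverse (B := A) (Matrix.ext fun i k => ?_),
    Matrix.ext fun i j => (hG i j).symm⟩
  have h := inner_d i k
  simp only [d_eq, sum_inner, ← Int.cast_smul_eq_zsmul ℝ, real_inner_smul_left, hG,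
    eq_comm (a := k)] at h
  rw [Matrix.mul_apply, Matrix.one_apply]
  exact_mod_cast h

theorem linearIndependent_coe_basis {n : Type*} [FiniteDimensional ℝ V]
    (hL : IsSelfDualLat L) (b : Basis n ℤ L) : LinearIndependent ℝ fun i => (b i : V) := by
  have := hL.isIntegralLat.discreteTopology
  have : IsZLattice ℝ L := ⟨hL.span_eq_top⟩
  have coe_eq : ⇑(b.ofZLatticeBasis ℝ) = fun i => (b i : V) :=
    funext (b.ofZLatticeBasis_apply ℝ L)
  exact coe_eq ▸ (b.ofZLatticeBasis ℝ).linearIndependent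

theorem isUnimodularLat [FiniteDimensional ℝ V] (hL : IsSelfDualLat L) : IsUnimodularLat L := by
  have := hL.isIntegralLat.discreteTopology
  let b := Module.finBasis ℤ L
  obtain ⟨G, hG, hgram⟩ := hL.exists_isUnit_det_gram b
  refine ⟨_, b, ?_⟩
  have det_pos : 0 < (Matrix.gram ℝ fun i => (b i : V)).det :=
    (Matrix.posDef_gram_of_linearIndependent (hL.linearIndependent_coe_basis b)).det_pos
  change (Matrix.gram ℝ fun i => (b i : V)).det = 1
  have det_eq : (Matrix.gram ℝ fun i => (b i : V)).det = (G.det : ℝ) := by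
    rw [← hgram, Int.cast_det]
  rw [det_eq] at det_pos ⊢
  rcases Int.isUnit_iff.1 hG with h | h
  · rw [h, Int.cast_one]
  · rw [h] at det_pos
    norm_num at det_pos

theorem map {W : Type*} [NormedAddCommGroup W] [InnerProductSpace ℝ W] (hL : IsSelfDualLat L)
    (e : V ≃ₗᵢ[ℝ] W) : IsSelfDualLat (L.map (e.toLinearEquiv.restrictScalars ℤ).toLinearMap) := by
  ext w
  obtain ⟨v, rfl⟩ := e.surjective w
  have mem_map (x : V) :
      e x ∈ L.map (e.toLinearEquiv.restrictScalars ℤ).toLinearMap ↔ x ∈ L :=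
    e.injective.mem_set_image
  conv_rhs => rw [mem_map, ← hL, mem_dualLat]
  simp [mem_dualLat]

end IsSelfDualLat

theorem IsEvenLat.map {W : Type*} [NormedAddCommGroup W] [InnerProductSpace ℝ W]
    {L : Submodule ℤ V} (hL : IsEvenLat L) (e : V ≃ₗᵢ[ℝ] W) :
    IsEvenLat (L.map (e.toLinearEquiv.restrictScalars ℤ).toLinearMap) := by
  refine ⟨?_, ?_⟩
  · rintro _ ⟨x, hx, rfl⟩ _ ⟨y, hy, rfl⟩
    simpa using hL.1 x hx y hy
  · rintro _ ⟨x, hx, rfl⟩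
    simpa using hL.2 x hx

theorem minNorm_eq_of_exists {L : Submodule ℤ V} {r : ℝ} (hle : ∀ v ∈ L, v ≠ 0 → r ≤ ⟪v, v⟫)
    (hmem : ∃ v ∈ L, v ≠ 0 ∧ ⟪v, v⟫ = r) : minNorm L = r := by
  refine IsLeast.csInf_eq ⟨hmem, ?_⟩
  rintro _ ⟨v, hv, hv0, rfl⟩
  exact hle v hv hv0

theorem minNorm_le_inner_self {L : Submodule ℤ V} {v : V} (hv : v ∈ L) (hv0 : v ≠ 0) :
    minNorm L ≤ ⟪v, v⟫ := by
  refine csInf_le ⟨0, ?_⟩ ⟨v, hv, hv0, rfl⟩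
  rintro _ ⟨x, -, -, rfl⟩
  exact real_inner_self_nonneg

theorem minNorm_map {W : Type*} [NormedAddCommGroup W] [InnerProductSpace ℝ W]
    (L : Submodule ℤ V) (e : V ≃ₗᵢ[ℝ] W) :
    minNorm (L.map (e.toLinearEquiv.restrictScalars ℤ).toLinearMap) = minNorm L := by
  simp [minNorm]

/-! ### The lattices `L(M,N,k)` -/

section LMN

variable {E : Type*} [NormedAddCommGroup E] {M N : Submodule ℤ E} {k : ℕ}

theorem mem_LMN {v : PiLp 2 fun _ : Fin k => E} :
    v ∈ LMN M N k ↔ ∃ n ∈ N, ∃ x : Fin k → E,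
      (∀ i, x i ∈ M) ∧ ∑ i, x i ∈ M ⊓ N ∧ WithLp.toLp 2 (fun i => n + x i) = v := by
  constructor
  · intro hv
    obtain ⟨x, ⟨hxM, hxs⟩, y, ⟨n, hn, hy⟩, rfl⟩ := Submodule.mem_sup.1 hv
    refine ⟨n, hn, x, hxM, hxs, ?_⟩
    ext i
    rw [PiLp.add_apply, hy, add_comm]
  · rintro ⟨n, hn, x, hxM, hxs, rfl⟩
    refine Submodule.mem_sup.2 ⟨WithLp.toLp 2 x, ⟨hxM, hxs⟩,
      WithLp.toLp 2 fun _ => n, ⟨n, hn, fun _ => rfl⟩, ?_⟩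
    ext i
    exact add_comm _ _

theorem const_mem_LMN {n : E} (hn : n ∈ N) :
    (WithLp.toLp 2 fun _ => n : PiLp 2 fun _ : Fin k => E) ∈ LMN M N k :=
  Submodule.mem_sup_right ⟨n, hn, fun _ => rfl⟩

theorem single_apply_mem {m : E} (hm : m ∈ M) (i j : Fin k) :
    (PiLp.single 2 i m : PiLp 2 fun _ : Fin k => E) j ∈ M := by
  rw [PiLp.single_apply]
  split_ifs
  exacts [hm, M.zero_mem]

theorem single_mem_LMN {m : E} (hm : m ∈ M ⊓ N) (i : Fin k) :
    PiLp.single 2 i m ∈ LMN M N k := by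
  refine Submodule.mem_sup_left ⟨single_apply_mem hm.1 i, ?_⟩
  simpa [PiLp.single_apply] using hm

theorem single_sub_single_mem_LMN {m : E} (hm : m ∈ M) (i j : Fin k) :
    (PiLp.single 2 i m - PiLp.single 2 j m : PiLp 2 fun _ : Fin k => E) ∈ LMN M N k := by
  refine Submodule.mem_sup_left
    ⟨fun l => M.sub_mem (single_apply_mem hm i l) (single_apply_mem hm j l), ?_⟩
  simp [PiLp.single_apply, Finset.sum_sub_distrib]

theorem apply_mem_sup_of_mem_LMN {v : PiLp 2 fun _ : Fin k => E} (hv : v ∈ LMN M N k) (i : Fin k) :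
    v i ∈ M ⊔ N := by
  obtain ⟨n, hn, x, hxM, -, rfl⟩ := mem_LMN.1 hv
  exact add_mem (Submodule.mem_sup_right hn) (Submodule.mem_sup_left (hxM i))

theorem mem_LsubM_of_apply_eq_zero {v : PiLp 2 fun _ : Fin k => E} (hv : v ∈ LMN M N k)
    {j : Fin k} (hj : v j = 0) : v ∈ LsubM M N k := by
  obtain ⟨n, hn, x, hxM, hxs, rfl⟩ := mem_LMN.1 hv
  have hnM : n ∈ M := by
    rw [eq_neg_of_add_eq_zero_left hj]
    exact M.neg_mem (hxM j)
  refine ⟨fun i => M.add_mem hnM (hxM i), ?_⟩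
  rw [Finset.sum_add_distrib]
  exact add_mem (sum_mem fun _ _ => ⟨hnM, hn⟩) hxs

end LMN

section LMNInner

variable {M N : Submodule ℤ V} {k : ℕ}

theorem inner_piLp_single_right {ι : Type*} [Fintype ι] [DecidableEq ι]
    (v : PiLp 2 fun _ : ι => V) (i : ι) (m : V) : ⟪v, PiLp.single 2 i m⟫ = ⟪v i, m⟫ := by
  rw [PiLp.inner_apply, Finset.sum_eq_single i]
  · rw [PiLp.single_eq_same]
  · intro j _ hj
    rw [PiLp.single_eq_of_ne _ hj, inner_zero_right]
  · simp

theorem inner_toLp_add_toLp_add {ι : Type*} [Fintype ι] (n n' : V) (x x' : ι → V) :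
    ⟪(WithLp.toLp 2 fun i => n + x i : PiLp 2 fun _ : ι => V), WithLp.toLp 2 fun i => n' + x' i⟫ =
      Fintype.card ι * ⟪n, n'⟫ + ⟪n, ∑ i, x' i⟫ + ⟪∑ i, x i, n'⟫ + ∑ i, ⟪x i, x' i⟫ := by
  simp only [PiLp.inner_apply, inner_add_left, inner_add_right, Finset.sum_add_distrib,
    inner_sum, sum_inner, Finset.sum_const, Finset.card_univ, nsmul_eq_mul]
  ring

theorem IsIntegralLat.LMN (hM : IsIntegralLat M) (hN : IsIntegralLat N) :
    IsIntegralLat (LMN M N k) := by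
  intro v hv w hw
  obtain ⟨n, hn, x, hx, hxs, rfl⟩ := mem_LMN.1 hv
  obtain ⟨n', hn', x', hx', hxs', rfl⟩ := mem_LMN.1 hw
  obtain ⟨a, ha⟩ := hN n hn n' hn'
  obtain ⟨b, hb⟩ := hN n hn _ hxs'.2
  obtain ⟨c, hc⟩ := hN _ hxs.2 n' hn'
  choose d hd using fun i => hM _ (hx i) _ (hx' i)
  refine ⟨k * a + b + c + ∑ i, d i, ?_⟩
  simp only [inner_toLp_add_toLp_add, ha, hb, hc, hd, Fintype.card_fin]
  push_cast
  rfl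

theorem IsEvenLat.LMN (hM : IsEvenLat M) (hN : IsEvenLat N) : IsEvenLat (LMN M N k) := by
  refine ⟨hM.1.LMN hN.1, fun v hv => ?_⟩
  obtain ⟨n, hn, x, hx, hxs, rfl⟩ := mem_LMN.1 hv
  obtain ⟨a, ha⟩ := hN.2 n hn
  obtain ⟨b, hb⟩ := hN.1 n hn _ hxs.2
  choose d hd using fun i => hM.2 _ (hx i)
  refine ⟨k * a + b + ∑ i, d i, ?_⟩
  simp only [inner_toLp_add_toLp_add, ha, hb, hd, real_inner_comm n, Fintype.card_fin,
    ← Finset.mul_sum]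
  push_cast
  ring

theorem IsSelfDualLat.LMN [NeZero k] (hM : IsSelfDualLat M) (hN : IsSelfDualLat N)
    (hMN : dualLat (M ⊓ N) ≤ M ⊔ N) : IsSelfDualLat (LMN M N k) := by
  refine le_antisymm (fun v hv => ?_)
    (isIntegralLat_iff_le_dualLat.1 (hM.isIntegralLat.LMN hN.isIntegralLat))
  rw [mem_dualLat] at hv
  have sub_mem (i j : Fin k) : v i - v j ∈ M := hM.le <| mem_dualLat.2 fun m hm => by
    simpa [inner_sub_left, inner_sub_right, inner_piLp_single_right] using
      hv _ (single_sub_single_mem_LMN hm i j)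
  have sum_apply_mem : ∑ i, v i ∈ N := hN.le <| mem_dualLat.2 fun n hn => by
    simpa [PiLp.inner_apply, sum_inner] using hv _ (const_mem_LMN hn)
  have apply_mem (i : Fin k) : v i ∈ M ⊔ N := hMN <| mem_dualLat.2 fun m hm => by
    simpa [inner_piLp_single_right] using hv _ (single_mem_LMN hm i)
  obtain ⟨m, hm, n, hn, hmn⟩ := Submodule.mem_sup.1 (apply_mem 0)
  have sub_mem_M (i : Fin k) : v i - n ∈ M := by
    have h : v i - n = v i - v 0 + m := by rw [← hmn]; abel
    exact h ▸ M.add_mem (sub_mem i 0) hm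
  refine mem_LMN.2 ⟨n, hn, fun i => v i - n, sub_mem_M,
    ⟨Submodule.sum_mem _ fun i _ => sub_mem_M i, ?_⟩, ?_⟩
  · rw [Finset.sum_sub_distrib]
    exact N.sub_mem sum_apply_mem (Submodule.sum_mem _ fun _ _ => hn)
  · ext i
    exact add_sub_cancel _ _

end LMNInner

section LMNMinimum

variable {M N : Submodule ℤ V} {k : ℕ}

theorem four_le_inner_self_of_mem_LsubM (hM : IsEvenLat M)
    (hMN : ∀ v ∈ M ⊓ N, v ≠ 0 → 4 ≤ ⟪v, v⟫) {v : PiLp 2 fun _ : Fin k => V}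
    (hv : v ∈ LsubM M N k) (hv0 : v ≠ 0) : 4 ≤ ⟪v, v⟫ := by
  have nonneg (i : Fin k) : 0 ≤ ⟪v i, v i⟫ := real_inner_self_nonneg
  obtain ⟨i, hi⟩ : ∃ i, v i ≠ 0 := by
    by_contra! h
    exact hv0 (PiLp.ext h)
  rw [PiLp.inner_apply]
  by_cases h : ∃ j ≠ i, v j ≠ 0
  · obtain ⟨j, hji, hj⟩ := h
    calc (4 : ℝ) ≤ ⟪v i, v i⟫ + ⟪v j, v j⟫ := by
          linarith [hM.two_le_inner_self (hv.1 i) hi, hM.two_le_inner_self (hv.1 j) hj]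
      _ ≤ ∑ l, ⟪v l, v l⟫ :=
          Finset.add_le_sum (fun l _ => nonneg l) (Finset.mem_univ i) (Finset.mem_univ j) hji.symm
  · push Not at h
    have sum_eq : ∑ l, v l = v i := Fintype.sum_eq_single i h
    exact (hMN _ (sum_eq ▸ hv.2) hi).trans
      (Finset.single_le_sum (fun l _ => nonneg l) (Finset.mem_univ i))

theorem four_le_inner_self_of_mem_LMN (hM : IsEvenLat M) (hN : IsEvenLat N) (hk : 3 ≤ k)
    (hsup : ∀ v ∈ M ⊔ N, v ≠ 0 → 1 ≤ ⟪v, v⟫) (hinf : ∀ v ∈ M ⊓ N, v ≠ 0 → 4 ≤ ⟪v, v⟫)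
    {v : PiLp 2 fun _ : Fin k => V} (hv : v ∈ LMN M N k) (hv0 : v ≠ 0) : 4 ≤ ⟪v, v⟫ := by
  by_cases h : ∃ j, v j = 0
  · obtain ⟨j, hj⟩ := h
    exact four_le_inner_self_of_mem_LsubM hM hinf (mem_LsubM_of_apply_eq_zero hv hj) hv0
  push Not at h
  have three_le : 3 ≤ ⟪v, v⟫ :=
    calc (3 : ℝ) ≤ ∑ _i : Fin k, 1 := by simpa using hk
      _ ≤ ∑ i, ⟪v i, v i⟫ :=
          Finset.sum_le_sum fun i _ => hsup _ (apply_mem_sup_of_mem_LMN hv i) (h i)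
      _ = ⟪v, v⟫ := (PiLp.inner_apply v v).symm
  obtain ⟨n, hn⟩ := (hM.LMN hN).2 v hv
  rw [hn] at three_le ⊢
  have two_le : 2 ≤ n := by
    have : 3 ≤ 2 * n := by exact_mod_cast three_le
    lia
  exact_mod_cast (by lia : 4 ≤ 2 * n)

end LMNMinimum

/-! ### Polarizations from Kleinian actions -/

section Polarization

variable {Υ M N : Submodule ℤ V}

theorem two_zsmul_mem_two_smul_iff {v : V} : (2 : ℤ) • v ∈ (2 : ℤ) • Υ ↔ v ∈ Υ := by
  have two_zsmul_injective : Function.Injective ((2 : ℤ) • · : V → V) := fun x y h =>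
    smul_right_injective V (two_ne_zero (α := ℝ))
      (by simpa only [← Int.cast_smul_eq_zsmul ℝ, Int.cast_ofNat] using h)
  exact two_zsmul_injective.mem_set_image

theorem inner_two_zsmul_self (x : V) : ⟪(2 : ℤ) • x, (2 : ℤ) • x⟫ = 4 * ⟪x, x⟫ := by
  simp only [← Int.cast_smul_eq_zsmul ℝ, real_inner_smul_left, real_inner_smul_right]
  norm_num [← mul_assoc]

theorem dualLat_two_smul_le (hdual : dualLat Υ = (2 : ℤ) • Υ) :
    dualLat ((2 : ℤ) • Υ) ≤ Υ := by
  intro v hv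
  rw [← two_zsmul_mem_two_smul_iff, ← hdual, mem_dualLat]
  intro y hy
  simpa [← Int.cast_smul_eq_zsmul ℝ, real_inner_smul_left, real_inner_smul_right] using
    mem_dualLat.1 hv _ (Submodule.smul_mem_pointwise_smul y (2 : ℤ) Υ hy)

theorem four_le_inner_self_of_mem_two_smul (hnorm : ∀ x ∈ Υ, ∃ n : ℤ, ⟪x, x⟫ = (n : ℝ)) {v : V}
    (hv : v ∈ (2 : ℤ) • Υ) (hv0 : v ≠ 0) : 4 ≤ ⟪v, v⟫ := by
  obtain ⟨x, hx, rfl⟩ := Submodule.mem_smul_pointwise_iff_exists _ _ _ |>.1 hv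
  have hx0 : x ≠ 0 := by
    rintro rfl
    exact hv0 (smul_zero _)
  rw [inner_two_zsmul_self]
  linarith [one_le_inner_self hx0 (hnorm x hx)]

theorem IsPolarization.isSelfDualLat_LMN {k : ℕ} [NeZero k] (h : IsPolarization Υ M N)
    (hdual : dualLat Υ = (2 : ℤ) • Υ) (hM : IsSelfDualLat M) (hN : IsSelfDualLat N) :
    IsSelfDualLat (LMN M N k) := by
  obtain ⟨-, -, -, -, sup_eq, inf_eq⟩ := h
  refine hM.LMN hN ?_
  rw [sup_eq, inf_eq]
  exact dualLat_two_smul_le hdual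

theorem IsPolarization.minNorm_LMN {k : ℕ} (hk : 3 ≤ k) (h : IsPolarization Υ M N)
    (hnorm : ∀ x ∈ Υ, ∃ n : ℤ, ⟪x, x⟫ = (n : ℝ)) (hone : ∃ x ∈ Υ, ⟪x, x⟫ = 1)
    (hM : IsEvenLat M) (hN : IsEvenLat N) : minNorm (LMN M N k) = 4 := by
  obtain ⟨-, -, -, -, sup_eq, inf_eq⟩ := h
  have : NeZero k := ⟨by lia⟩
  refine minNorm_eq_of_exists (fun v hv hv0 => ?_) ?_
  · refine four_le_inner_self_of_mem_LMN hM hN hk ?_ ?_ hv hv0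
    · rw [sup_eq]
      exact fun x hx hx0 => one_le_inner_self hx0 (hnorm x hx)
    · rw [inf_eq]
      exact fun x hx hx0 => four_le_inner_self_of_mem_two_smul hnorm hx hx0
  · obtain ⟨x, hx, hx1⟩ := hone
    have mem_inf : (2 : ℤ) • x ∈ M ⊓ N := inf_eq ▸ two_zsmul_mem_two_smul_iff.2 hx
    have inner_single : ⟪(PiLp.single 2 0 ((2 : ℤ) • x) : PiLp 2 fun _ : Fin k => V),
        PiLp.single 2 0 ((2 : ℤ) • x)⟫ = 4 := by
      rw [inner_piLp_single_right, PiLp.single_eq_same, inner_two_zsmul_self, hx1, mul_one]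
    exact ⟨_, single_mem_LMN mem_inf 0, inner_self_ne_zero.1 (inner_single ▸ four_ne_zero),
      inner_single⟩

end Polarization

theorem map_id_sub_le {E : Type*} [AddCommGroup E] {Υ : Submodule ℤ E} {f : E →ₗ[ℤ] E}
    (hle : Υ.map f ≤ Υ) : Υ.map (LinearMap.id - f) ≤ Υ := by
  rintro _ ⟨x, hx, rfl⟩
  exact Υ.sub_mem hx (hle ⟨x, hx, rfl⟩)

theorem map_sup_map_id_sub {E : Type*} [AddCommGroup E] {Υ : Submodule ℤ E}
    {f : E →ₗ[ℤ] E} (hle : Υ.map f ≤ Υ) :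
    Υ.map f ⊔ Υ.map (LinearMap.id - f) = Υ := by
  refine le_antisymm (sup_le hle (map_id_sub_le hle)) fun x hx => ?_
  exact Submodule.mem_sup.2 ⟨f x, ⟨x, hx, rfl⟩, x - f x, ⟨x, hx, rfl⟩, add_sub_cancel _ _⟩

/-- The `ℤ`-linear map `α` acts on `V` as the Kleinian integer `(1 + √-7) / 2`, a root of
`t² - t + 2`, and its adjoint acts as the complex conjugate `1 - α`. Since the two roots have
product `2`, the quadratic relation is stated as `α (1 - α) = 2`. -/
structure IsKleinianAction (α : V →ₗ[ℤ] V) : Prop where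
  inner_apply_left (x y : V) : ⟪α x, y⟫ = ⟪x, y - α y⟫
  apply_sub_apply (x : V) : α (x - α x) = (2 : ℤ) • x

namespace IsKleinianAction

variable {α : V →ₗ[ℤ] V} {Υ : Submodule ℤ V}

theorem id_sub (hα : IsKleinianAction α) : IsKleinianAction (LinearMap.id - α) where
  inner_apply_left x y := by
    simp only [LinearMap.sub_apply, LinearMap.id_apply, sub_sub_cancel, inner_sub_left,
      hα.inner_apply_left x y, inner_sub_right]
  apply_sub_apply x := by
    simpa only [LinearMap.sub_apply, LinearMap.id_apply, sub_sub_cancel, map_sub]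
      using hα.apply_sub_apply x

theorem apply_apply (hα : IsKleinianAction α) (x : V) : α (α x) = α x - (2 : ℤ) • x := by
  rw [← hα.apply_sub_apply x, map_sub, sub_sub_cancel]

theorem inner_apply_apply (hα : IsKleinianAction α) (x y : V) : ⟪α x, α y⟫ = 2 * ⟪x, y⟫ := by
  rw [hα.inner_apply_left, hα.apply_apply, sub_sub_cancel, ← Int.cast_smul_eq_zsmul ℝ,
    real_inner_smul_right, Int.cast_ofNat]

theorem injective (hα : IsKleinianAction α) : Function.Injective α := by
  refine (injective_iff_map_eq_zero α).2 fun x hx => inner_self_eq_zero (𝕜 := ℝ).1 ?_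
  have inner_eq := hα.inner_apply_apply x x
  rw [hx, inner_zero_left] at inner_eq
  linarith

theorem map_inf_map_id_sub (hα : IsKleinianAction α) (hle : Υ.map α ≤ Υ) :
    Υ.map α ⊓ Υ.map (LinearMap.id - α) = (2 : ℤ) • Υ := by
  ext v
  rw [Submodule.mem_smul_pointwise_iff_exists]
  constructor
  · rintro ⟨⟨x, hx, rfl⟩, y, hy, hxy⟩
    refine ⟨x + y, Υ.add_mem hx hy, ?_⟩
    calc (2 : ℤ) • (x + y) = α (x - α x) + α (y - α y) := by
          rw [hα.apply_sub_apply, hα.apply_sub_apply, smul_add]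
      _ = α (x - α x) + α (α x) := congrArg (α (x - α x) + α ·) hxy
      _ = α x := by rw [map_sub, sub_add_cancel]
  · rintro ⟨x, hx, rfl⟩
    rw [← hα.apply_sub_apply x]
    exact ⟨⟨x - α x, Υ.sub_mem hx (hle ⟨x, hx, rfl⟩), rfl⟩, α x, hle ⟨x, hx, rfl⟩,
      (map_sub α x (α x)).symm⟩

theorem isEvenLat_map (hα : IsKleinianAction α) (hdual : (2 : ℤ) • Υ ≤ dualLat Υ)
    (hnorm : ∀ x ∈ Υ, ∃ n : ℤ, ⟪x, x⟫ = (n : ℝ)) : IsEvenLat (Υ.map α) := by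
  constructor
  · rintro _ ⟨x, hx, rfl⟩ _ ⟨y, hy, rfl⟩
    have h := mem_dualLat.1 (hdual (Submodule.smul_mem_pointwise_smul x (2 : ℤ) Υ hx)) y hy
    simpa [hα.inner_apply_apply, ← Int.cast_smul_eq_zsmul ℝ, real_inner_smul_left] using h
  · rintro _ ⟨x, hx, rfl⟩
    exact (hnorm x hx).imp fun n hn => by rw [hα.inner_apply_apply, hn]

theorem isSelfDualLat_map (hα : IsKleinianAction α) (hdual : dualLat Υ = (2 : ℤ) • Υ)
    (hnorm : ∀ x ∈ Υ, ∃ n : ℤ, ⟪x, x⟫ = (n : ℝ)) : IsSelfDualLat (Υ.map α) := by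
  refine le_antisymm (fun v hv => ?_)
    (isIntegralLat_iff_le_dualLat.1 (hα.isEvenLat_map hdual.ge hnorm).1)
  have conj_mem : v - α v ∈ (2 : ℤ) • Υ := by
    rw [← hdual, mem_dualLat]
    intro y hy
    rw [real_inner_comm, ← hα.inner_apply_left, real_inner_comm]
    exact mem_dualLat.1 hv _ ⟨y, hy, rfl⟩
  obtain ⟨u, hu, hu_eq⟩ := (Submodule.mem_smul_pointwise_iff_exists _ _ _).1 conj_mem
  refine ⟨u, hu, hα.id_sub.injective ?_⟩
  simp [← hα.apply_sub_apply u, ← hu_eq]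

theorem isPolarization (hα : IsKleinianAction α) (hle : Υ.map α ≤ Υ)
    (hdual : (2 : ℤ) • Υ ≤ dualLat Υ) (hnorm : ∀ x ∈ Υ, ∃ n : ℤ, ⟪x, x⟫ = (n : ℝ)) :
    IsPolarization Υ (Υ.map α) (Υ.map (LinearMap.id - α)) :=
  ⟨hle, map_id_sub_le hle, (hα.isEvenLat_map hdual hnorm).1,
    (hα.id_sub.isEvenLat_map hdual hnorm).1, map_sup_map_id_sub hle, hα.map_inf_map_id_sub hle⟩

end IsKleinianAction

/-! ### The scaled `E₈` lattice -/

section E8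

open Matrix

/-- The map `x ↦ x / 2` from `ℤ^ι` to Euclidean space. -/
def halfVec (ι : Type*) : (ι → ℤ) →ₗ[ℤ] EuclideanSpace ℝ ι where
  toFun x := WithLp.toLp 2 fun i => (x i : ℝ) / 2
  map_add' x y := by
    ext i
    simp [add_div]
  map_smul' c x := by
    ext i
    simp [mul_div_assoc]

theorem halfVec_apply {ι : Type*} (x : ι → ℤ) (i : ι) : halfVec ι x i = x i / 2 :=
  rfl

theorem inner_halfVec_right {ι : Type*} [Fintype ι] (v : EuclideanSpace ℝ ι) (x : ι → ℤ) :
    ⟪v, halfVec ι x⟫ = (∑ i, v i * x i) / 2 := by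
  simp [halfVec_apply, PiLp.inner_apply, Finset.sum_div, div_mul_eq_mul_div, mul_comm]

theorem inner_halfVec_halfVec {ι : Type*} [Fintype ι] (x y : ι → ℤ) :
    ⟪halfVec ι x, halfVec ι y⟫ = ((x ⬝ᵥ y : ℤ) : ℝ) / 4 := by
  rw [inner_halfVec_right, dotProduct, Int.cast_sum, Finset.sum_div, Finset.sum_div]
  refine Finset.sum_congr rfl fun i _ => ?_
  rw [halfVec_apply, Int.cast_mul]
  ring

theorem halfVec_single_two {ι : Type*} [DecidableEq ι] (i : ι) :
    halfVec ι (Pi.single i 2) = EuclideanSpace.single i 1 := by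
  ext j
  obtain rfl | h := eq_or_ne j i
  · simp [halfVec_apply]
  · simp [halfVec_apply, h]

/-- Paley's construction for the prime `7`: with rows and columns labelled by `∞, 0, …, 6`, row `∞`
consists of ones and row `i` is the indicator function of `{i + s² : s ∈ ZMod 7}`. Modulo `2` the
rows span the extended Hamming code. -/
def hammingMatrix : Matrix (Fin 8) (Fin 8) ℤ :=
  !![1, 1, 1, 1, 1, 1, 1, 1;
     0, 1, 1, 1, 0, 1, 0, 0;
     0, 0, 1, 1, 1, 0, 1, 0;
     0, 0, 0, 1, 1, 1, 0, 1;
     0, 1, 0, 0, 1, 1, 1, 0;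
     0, 0, 1, 0, 0, 1, 1, 1;
     0, 1, 0, 1, 0, 0, 1, 1;
     0, 1, 1, 0, 1, 0, 0, 1]

/-- The skew Hadamard matrix of order `8` with signs prescribed by `hammingMatrix`. -/
def skewHadamard : Matrix (Fin 8) (Fin 8) ℤ :=
  (2 : ℤ) • hammingMatrix - of fun _ _ => 1

theorem hammingMatrix_add_transpose : hammingMatrix + hammingMatrixᵀ = (of fun _ _ => 1) + 1 := by
  decide

theorem even_hammingMatrix_mul_transpose (i j : Fin 8) :
    Even ((hammingMatrix * hammingMatrixᵀ) i j) := by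
  revert i j
  decide

theorem skewHadamard_transpose : skewHadamardᵀ = (2 : ℤ) • 1 - skewHadamard := by
  decide

theorem skewHadamard_mul_self :
    skewHadamard * skewHadamard = (2 : ℤ) • skewHadamard - (8 : ℤ) • 1 := by
  decide

/-- The vectors of `ℤ⁸` whose reduction modulo `2` lies in the extended Hamming code, which is its
own dual, so that the rows of `hammingMatrix` may be used as parity checks. -/
def hammingLat : Submodule ℤ (Fin 8 → ℤ) :=
  ((2 : ℤ) • (⊤ : Submodule ℤ (Fin 8 → ℤ))).comap hammingMatrix.mulVecLin

theorem mem_hammingLat_iff_exists {x : Fin 8 → ℤ} :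
    x ∈ hammingLat ↔ ∃ z, hammingMatrix *ᵥ x = (2 : ℤ) • z := by
  simp [hammingLat, Submodule.mem_smul_pointwise_iff_exists, eq_comm]

theorem mem_hammingLat_iff_even {x : Fin 8 → ℤ} :
    x ∈ hammingLat ↔ ∀ i, Even ((hammingMatrix *ᵥ x) i) := by
  simp only [mem_hammingLat_iff_exists, funext_iff, even_iff_exists_two_mul, Pi.smul_apply,
    smul_eq_mul, Classical.skolem]

theorem two_zsmul_mem_hammingLat (x : Fin 8 → ℤ) : (2 : ℤ) • x ∈ hammingLat :=
  mem_hammingLat_iff_exists.2 ⟨hammingMatrix *ᵥ x, mulVec_smul _ _ _⟩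

theorem single_two_mem_hammingLat (i : Fin 8) : Pi.single i 2 ∈ hammingLat :=
  mem_hammingLat_iff_even.2 fun j => by simp

theorem one_mem_hammingLat : 1 ∈ hammingLat :=
  mem_hammingLat_iff_even.2 (by decide)

theorem hammingMatrix_row_mem_hammingLat (i : Fin 8) : hammingMatrix i ∈ hammingLat :=
  mem_hammingLat_iff_even.2 fun j => even_hammingMatrix_mul_transpose j i

theorem sum_eq_of_hammingMatrix_mulVec {x z : Fin 8 → ℤ} (h : hammingMatrix *ᵥ x = (2 : ℤ) • z) :
    ∑ i, x i = 2 * z 0 := by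
  have h0 : (hammingMatrix *ᵥ x) 0 = ∑ i, x i := by
    simp [mulVec, dotProduct, hammingMatrix, Fin.sum_univ_succ]
  rw [← h0, h, Pi.smul_apply, smul_eq_mul]

theorem ones_mulVec {ι R : Type*} [Fintype ι] [NonAssocSemiring R] (x : ι → R) :
    (of fun _ _ => 1 : Matrix ι ι R) *ᵥ x = fun _ => ∑ i, x i := by
  ext i
  simp [mulVec, dotProduct]

theorem four_dvd_dotProduct_self {x : Fin 8 → ℤ} (hx : x ∈ hammingLat) : 4 ∣ x ⬝ᵥ x := by
  obtain ⟨z, hz⟩ := mem_hammingLat_iff_exists.1 hx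
  have sum_eq := sum_eq_of_hammingMatrix_mulVec hz
  have two_mul_dotProduct_eq : 2 * (x ⬝ᵥ hammingMatrix *ᵥ x) = (∑ i, x i) ^ 2 + x ⬝ᵥ x := by
    have h := congrArg (fun A => x ⬝ᵥ A *ᵥ x) hammingMatrix_add_transpose
    have dotProduct_ones : (x ⬝ᵥ fun _ => ∑ i, x i) = (∑ i, x i) ^ 2 := by
      rw [sq, dotProduct, Finset.sum_mul]
    simpa only [add_mulVec, dotProduct_add, one_mulVec, dotProduct_transpose_mulVec, ones_mulVec,
      dotProduct_ones, ← two_mul] using h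
  rw [hz, sum_eq, dotProduct_smul, smul_eq_mul] at two_mul_dotProduct_eq
  exact ⟨x ⬝ᵥ z - z 0 ^ 2, by linarith⟩

theorem even_dotProduct {x y : Fin 8 → ℤ} (hx : x ∈ hammingLat) (hy : y ∈ hammingLat) :
    Even (x ⬝ᵥ y) := by
  have hxy := four_dvd_dotProduct_self (hammingLat.add_mem hx hy)
  have hx' := four_dvd_dotProduct_self hx
  have hy' := four_dvd_dotProduct_self hy
  rw [add_dotProduct, dotProduct_add, dotProduct_add, dotProduct_comm y x] at hxy
  rw [Int.even_iff]
  lia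

/-- The `E₈` lattice scaled by `1 / √2`, by construction A applied to the extended Hamming code. -/
def scaledE8 : Submodule ℤ (EuclideanSpace ℝ (Fin 8)) :=
  hammingLat.map (halfVec (Fin 8))

theorem exists_inner_self_eq_of_mem_scaledE8 {v : EuclideanSpace ℝ (Fin 8)} (hv : v ∈ scaledE8) :
    ∃ n : ℤ, ⟪v, v⟫ = (n : ℝ) := by
  obtain ⟨x, hx, rfl⟩ := hv
  obtain ⟨n, hn⟩ := four_dvd_dotProduct_self hx
  refine ⟨n, ?_⟩
  rw [inner_halfVec_halfVec, hn]
  push_cast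
  ring

theorem exists_mem_scaledE8_inner_self_eq_one : ∃ v ∈ scaledE8, ⟪v, v⟫ = 1 := by
  refine ⟨_, ⟨_, single_two_mem_hammingLat 0, rfl⟩, ?_⟩
  simp [halfVec_single_two]

theorem dualLat_scaledE8 : dualLat scaledE8 = (2 : ℤ) • scaledE8 := by
  refine le_antisymm (fun v hv => ?_) ?_
  · rw [mem_dualLat] at hv
    have coord_int (i : Fin 8) : ∃ n : ℤ, v i = n := by
      simpa [halfVec_single_two, EuclideanSpace.inner_single_right] using
        hv _ ⟨_, single_two_mem_hammingLat i, rfl⟩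
    choose x hx using coord_int
    have x_mem : x ∈ hammingLat := mem_hammingLat_iff_even.2 fun i => by
      obtain ⟨n, hn⟩ := hv _ ⟨_, hammingMatrix_row_mem_hammingLat i, rfl⟩
      refine even_iff_exists_two_mul.2 ⟨n, ?_⟩
      rw [inner_halfVec_right, div_eq_iff two_ne_zero] at hn
      have sum_eq : (((hammingMatrix *ᵥ x) i : ℤ) : ℝ) = ∑ j, v j * hammingMatrix i j := by
        simp only [mulVec, dotProduct, Int.cast_sum, Int.cast_mul, hx, mul_comm]
      exact_mod_cast sum_eq.trans (hn.trans (mul_comm _ _))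
    refine (Submodule.mem_smul_pointwise_iff_exists _ _ _).2 ⟨_, ⟨x, x_mem, rfl⟩, ?_⟩
    ext i
    simp [halfVec_apply, hx, ← Int.cast_smul_eq_zsmul ℝ, mul_div_cancel₀]
  · intro v hv
    obtain ⟨_, ⟨x, hx, rfl⟩, rfl⟩ := (Submodule.mem_smul_pointwise_iff_exists _ _ _).1 hv
    rw [mem_dualLat]
    rintro _ ⟨y, hy, rfl⟩
    obtain ⟨n, hn⟩ := even_iff_exists_two_mul.1 (even_dotProduct hx hy)
    refine ⟨n, ?_⟩
    rw [← map_smul, inner_halfVec_halfVec, smul_dotProduct, hn, smul_eq_mul]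
    push_cast
    ring

theorem isKleinianAction_toEuclideanLin {ι : Type*} [Fintype ι] [DecidableEq ι]
    {A : Matrix ι ι ℝ} (htranspose : Aᵀ = 1 - A) (hmul : A * (1 - A) = (2 : ℝ) • 1) :
    IsKleinianAction ((toEuclideanLin A).restrictScalars ℤ) where
  inner_apply_left x y := by
    rw [LinearMap.restrictScalars_apply, ← LinearMap.adjoint_inner_right,
      ← toEuclideanLin_conjTranspose_eq_adjoint, conjTranspose_eq_transpose_of_trivial, htranspose,
      map_sub, LinearMap.sub_apply]
    simp
  apply_sub_apply x := by
    have h := congrArg (fun B => toEuclideanLin B x) hmul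
    simp only [toEuclideanLin, toLpLin_mul_same, toLpLin_one, map_sub, map_smul,
      LinearMap.smul_apply, LinearMap.comp_apply, LinearMap.sub_apply, LinearMap.id_apply] at h
    simpa [← Int.cast_smul_eq_zsmul ℝ] using h

/-- Half the skew Hadamard matrix, as a real matrix. It represents `(1 + √-7) / 2`. -/
def kleinianMatrix : Matrix (Fin 8) (Fin 8) ℝ :=
  (1 / 2 : ℝ) • (Int.castRingHom ℝ).mapMatrix skewHadamard

theorem kleinianMatrix_transpose : kleinianMatrixᵀ = 1 - kleinianMatrix := by
  have h : ((Int.castRingHom ℝ).mapMatrix skewHadamard)ᵀ =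
      (Int.castRingHom ℝ).mapMatrix ((2 : ℤ) • 1 - skewHadamard) := by
    rw [← skewHadamard_transpose]
    rfl
  rw [kleinianMatrix, transpose_smul, h, map_sub, map_zsmul, map_one]
  module

theorem kleinianMatrix_mul_one_sub_self : kleinianMatrix * (1 - kleinianMatrix) = (2 : ℝ) • 1 := by
  rw [kleinianMatrix, mul_sub, mul_one, smul_mul_smul, ← map_mul, skewHadamard_mul_self, map_sub,
    map_zsmul, map_zsmul, map_one]
  module

/-- The action of `(1 + √-7) / 2` on `ℝ⁸` given by `kleinianMatrix`. -/
def kleinianMap : EuclideanSpace ℝ (Fin 8) →ₗ[ℤ] EuclideanSpace ℝ (Fin 8) :=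
  (toEuclideanLin kleinianMatrix).restrictScalars ℤ

theorem isKleinianAction_kleinianMap : IsKleinianAction kleinianMap :=
  isKleinianAction_toEuclideanLin kleinianMatrix_transpose kleinianMatrix_mul_one_sub_self

theorem toEuclideanLin_halfVec {ι : Type*} [Fintype ι] [DecidableEq ι] (A : Matrix ι ι ℤ)
    (x : ι → ℤ) :
    toEuclideanLin ((Int.castRingHom ℝ).mapMatrix A) (halfVec ι x) = halfVec ι (A *ᵥ x) := by
  ext i
  simp [halfVec_apply, mulVec, dotProduct, Finset.sum_div, mul_div_assoc]

theorem kleinianMap_halfVec_of_skewHadamard_mulVec {x y : Fin 8 → ℤ}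
    (h : skewHadamard *ᵥ x = (2 : ℤ) • y) : kleinianMap (halfVec _ x) = halfVec _ y := by
  rw [kleinianMap, LinearMap.restrictScalars_apply, kleinianMatrix, map_smul, LinearMap.smul_apply,
    toEuclideanLin_halfVec, h, map_zsmul]
  module

theorem map_kleinianMap_scaledE8_le : scaledE8.map kleinianMap ≤ scaledE8 := by
  rintro _ ⟨_, ⟨x, hx, rfl⟩, rfl⟩
  obtain ⟨z, hz⟩ := mem_hammingLat_iff_exists.1 hx
  have skewHadamard_mulVec : skewHadamard *ᵥ x = (2 : ℤ) • ((2 : ℤ) • z - z 0 • 1) := by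
    rw [skewHadamard, sub_mulVec, smul_mulVec, hz, ones_mulVec, sum_eq_of_hammingMatrix_mulVec hz]
    ext i
    simp only [Pi.sub_apply, Pi.smul_apply, Pi.one_apply, smul_eq_mul]
    ring
  exact ⟨_, hammingLat.sub_mem (two_zsmul_mem_hammingLat z)
    (hammingLat.smul_mem _ one_mem_hammingLat),
    (kleinianMap_halfVec_of_skewHadamard_mulVec skewHadamard_mulVec).symm⟩

end E8

/-! ### The Leech lattice -/

theorem nonempty_linearIsometryEquiv_of_finrank_eq [FiniteDimensional ℝ V] {n : ℕ}
    (h : finrank ℝ V = n) : Nonempty (V ≃ₗᵢ[ℝ] EuclideanSpace ℝ (Fin n)) :=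
  ⟨((stdOrthonormalBasis ℝ V).reindex (finCongr h)).repr⟩

theorem finrank_piLp_two {ι : Type*} [Fintype ι] [FiniteDimensional ℝ V] :
    finrank ℝ (PiLp 2 fun _ : ι => V) = Fintype.card ι * finrank ℝ V := by
  rw [(WithLp.linearEquiv 2 ℝ (ι → V)).finrank_eq, finrank_pi_fintype, Finset.sum_const,
    Finset.card_univ, smul_eq_mul]

theorem exists_isSelfDualLat_isEvenLat_minNorm_eq_four :
    ∃ L : Submodule ℤ (PiLp 2 fun _ : Fin 3 => EuclideanSpace ℝ (Fin 8)),
      IsSelfDualLat L ∧ IsEvenLat L ∧ minNorm L = 4 := by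
  have hα := isKleinianAction_kleinianMap
  have hnorm (v : EuclideanSpace ℝ (Fin 8)) (hv : v ∈ scaledE8) :=
    exists_inner_self_eq_of_mem_scaledE8 hv
  have hpol := hα.isPolarization map_kleinianMap_scaledE8_le dualLat_scaledE8.ge hnorm
  have hM := hα.isEvenLat_map dualLat_scaledE8.ge hnorm
  have hN := hα.id_sub.isEvenLat_map dualLat_scaledE8.ge hnorm
  exact ⟨LMN _ _ 3, hpol.isSelfDualLat_LMN dualLat_scaledE8
      (hα.isSelfDualLat_map dualLat_scaledE8 hnorm)
      (hα.id_sub.isSelfDualLat_map dualLat_scaledE8 hnorm),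
    hM.LMN hN, hpol.minNorm_LMN le_rfl hnorm exists_mem_scaledE8_inner_self_eq_one hM hN⟩

/-- a Leech lattice exists: a rank 24 even unimodular lattice with
minimum norm 4. -/
theorem statement6 :
    ∃ L : Submodule ℤ (EuclideanSpace ℝ (Fin 24)),
      IsLat L ∧ IsEvenLat L ∧ IsUnimodularLat L ∧
      minNorm L = 4 ∧ ∀ x ∈ L, x ≠ 0 → 4 ≤ ⟪x, x⟫ := by
  obtain ⟨L, selfDual, even, minNorm_eq⟩ := exists_isSelfDualLat_isEvenLat_minNorm_eq_four
  have finrank_eq : finrank ℝ (PiLp 2 fun _ : Fin 3 => EuclideanSpace ℝ (Fin 8)) = 24 := by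
    simp [finrank_piLp_two]
  obtain ⟨e⟩ := nonempty_linearIsometryEquiv_of_finrank_eq finrank_eq
  have minNorm_map_eq := (minNorm_map L e).trans minNorm_eq
  exact ⟨_, (selfDual.map e).isLat, even.map e, (selfDual.map e).isUnimodularLat, minNorm_map_eq,
    fun _ hx hx0 => minNorm_map_eq.ge.trans (minNorm_le_inner_self hx hx0)⟩
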